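/- arXiv:1202.0685 — 5 statements merged into one kernel-verified Lean document; each statement's English description precedes it below -/
import Mathlib

section
/- Let u, v : ℝ² × [0,T] → ℝ and S : ℝ² × [0,T] → Matrix (Fin 2) (Fin 2) ℝ be C² maps with S symmetric-valued, and let P : ℝ × [0,T] → ℝ be continuous. Let φ = (x, y) : ℝ² × [0,T] → ℝ² be a C² flow map: ∂φ/∂t(ξ,t) = (u, v)(φ(ξ,t), t) and φ(ξ,0) = ξ, and assume the deformation gradient F(ξ,t) = D_ξφ(ξ,t) satisfies det F(ξ,t) = 1 and F(ξ,t) is invertible for all (ξ,t). Assume the momentum equation ∂u/∂t + u ∂u/∂x + v ∂u/∂y = ∂S₁₁/∂x + ∂S₁₂/∂y − P(x,t) and the constitutive equation ∂S/∂t + u ∂S/∂x + v ∂S/∂y − (∇v)S − S(∇v)ᵀ = 0 hold on ℝ² × [0,T], where (∇v)ᵢⱼ = ∂(u,v)ᵢ/∂xⱼ. Define C(ξ) := S(ξ, 0). Then for all (ξ,t): ∂²x/∂t²(ξ₁,ξ₂,t) = Σ_{i,j=1}^{2} ∂/∂ξᵢ ( C_{ji}(ξ) ∂x/∂ξⱼ(ξ,t)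 ) − P(x(ξ,t), t). -/
open Matrix Set

/-- Joint `C^n` regularity of a curried function. -/
def CD (n : WithTop ℕ∞) (f : ℝ → ℝ → ℝ → ℝ) : Prop :=
  ContDiff ℝ n fun p : ℝ × ℝ × ℝ => f p.1 p.2.1 p.2.2

noncomputable def d1 (f : ℝ → ℝ → ℝ → ℝ) : ℝ → ℝ → ℝ → ℝ :=
  fun a b t => deriv (fun s => f s b t) a
noncomputable def d2 (f : ℝ → ℝ → ℝ → ℝ) : ℝ → ℝ → ℝ → ℝ :=
  fun a b t => deriv (fun s => f a s t) b
noncomputable def d3 (f : ℝ → ℝ → ℝ → ℝ) : ℝ → ℝ → ℝ → ℝ :=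
  fun a b t => deriv (fun s => f a b s) t

noncomputable def DD (f : ℝ → ℝ → ℝ → ℝ) (w : ℝ × ℝ × ℝ) : ℝ → ℝ → ℝ → ℝ :=
  fun a b t => fderiv ℝ (fun p : ℝ × ℝ × ℝ => f p.1 p.2.1 p.2.2) (a, b, t) w

theorem chain_aux {f : ℝ → ℝ → ℝ → ℝ} (hf : CD 1 f) {α β γ : ℝ → ℝ} {α' β' γ' t : ℝ}
    (h1 : HasDerivAt α α' t) (h2 : HasDerivAt β β' t) (h3 : HasDerivAt γ γ' t) :
    HasDerivAt (fun s => f (α s) (β s) (γ s)) (DD f (α', β', γ') (α t) (β t) (γ t)) t := by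
  have hd : HasFDerivAt (fun p : ℝ × ℝ × ℝ => f p.1 p.2.1 p.2.2)
      (fderiv ℝ (fun p : ℝ × ℝ × ℝ => f p.1 p.2.1 p.2.2) (α t, β t, γ t)) (α t, β t, γ t) :=
    ((ContDiff.differentiable hf (by norm_num)) _).hasFDerivAt
  have hg : HasDerivAt (fun s => (α s, β s, γ s)) (α', β', γ') t := h1.prodMk (h2.prodMk h3)
  exact hd.comp_hasDerivAt t hg

theorem d1_eq {f : ℝ → ℝ → ℝ → ℝ} (hf : CD 1 f) : d1 f = DD f (1, 0, 0) := by
  funext a b t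
  exact (chain_aux hf (hasDerivAt_id a) (hasDerivAt_const a b) (hasDerivAt_const a t)).deriv
theorem d2_eq {f : ℝ → ℝ → ℝ → ℝ} (hf : CD 1 f) : d2 f = DD f (0, 1, 0) := by
  funext a b t
  exact (chain_aux hf (hasDerivAt_const b a) (hasDerivAt_id b) (hasDerivAt_const b t)).deriv
theorem d3_eq {f : ℝ → ℝ → ℝ → ℝ} (hf : CD 1 f) : d3 f = DD f (0, 0, 1) := by
  funext a b t
  exact (chain_aux hf (hasDerivAt_const t a) (hasDerivAt_const t b) (hasDerivAt_id t)).deriv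

theorem chain {f : ℝ → ℝ → ℝ → ℝ} (hf : CD 1 f) {α β γ : ℝ → ℝ} {α' β' γ' t : ℝ}
    (h1 : HasDerivAt α α' t) (h2 : HasDerivAt β β' t) (h3 : HasDerivAt γ γ' t) :
    HasDerivAt (fun s => f (α s) (β s) (γ s))
      (d1 f (α t) (β t) (γ t) * α' + d2 f (α t) (β t) (γ t) * β'
        + d3 f (α t) (β t) (γ t) * γ') t := by
  have h := chain_aux hf h1 h2 h3
  have e : ((α', β', γ') : ℝ × ℝ × ℝ)
      = α' • ((1, 0, 0) : ℝ × ℝ × ℝ) + β' • ((0, 1, 0) : ℝ × ℝ × ℝ)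
        + γ' • ((0, 0, 1) : ℝ × ℝ × ℝ) := by simp
  rw [d1_eq hf, d2_eq hf, d3_eq hf]
  convert h using 1
  unfold DD
  rw [e, map_add, map_add, map_smul, map_smul, map_smul]
  simp only [smul_eq_mul]
  ring

theorem CD.one {f : ℝ → ℝ → ℝ → ℝ} (hf : CD 2 f) : CD 1 f :=
  ContDiff.of_le hf (by norm_num)

theorem CD_DD {f : ℝ → ℝ → ℝ → ℝ} (hf : CD 2 f) (w : ℝ × ℝ × ℝ) : CD 1 (DD f w) := by
  have h : ContDiff ℝ 1 (fderiv ℝ (fun p : ℝ × ℝ × ℝ => f p.1 p.2.1 p.2.2)) :=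
    ContDiff.fderiv_right hf (by norm_num)
  exact h.clm_apply contDiff_const

theorem DD_comm {f : ℝ → ℝ → ℝ → ℝ} (hf : CD 2 f) (w z : ℝ × ℝ × ℝ) :
    DD (DD f w) z = DD (DD f z) w := by
  have h : ContDiff ℝ 1 (fderiv ℝ (fun p : ℝ × ℝ × ℝ => f p.1 p.2.1 p.2.2)) :=
    ContDiff.fderiv_right hf (by norm_num)
  have key : ∀ w z : ℝ × ℝ × ℝ, ∀ p : ℝ × ℝ × ℝ, DD (DD f w) z p.1 p.2.1 p.2.2
      = fderiv ℝ (fderiv ℝ (fun p : ℝ × ℝ × ℝ => f p.1 p.2.1 p.2.2)) p z w := by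
    intro w z p
    have h1 := ((h.differentiable (by norm_num)) p).hasFDerivAt.clm_apply
      (hasFDerivAt_const w p)
    have h2 := h1.fderiv
    have h3 := congrArg (fun L => L z) h2
    simp at h3
    exact h3
  funext a b t
  have e1 := key w z (a, b, t)
  have e2 := key z w (a, b, t)
  have e3 : IsSymmSndFDerivAt ℝ (fun p : ℝ × ℝ × ℝ => f p.1 p.2.1 p.2.2) (a, b, t) :=
    (ContDiff.contDiffAt hf).isSymmSndFDerivAt (by simp)
  exact e1.trans ((e3 z w).trans e2.symm)

theorem CD_d1 {f : ℝ → ℝ → ℝ → ℝ} (hf : CD 2 f) : CD 1 (d1 f) := by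
  rw [d1_eq hf.one]; exact CD_DD hf _
theorem CD_d2 {f : ℝ → ℝ → ℝ → ℝ} (hf : CD 2 f) : CD 1 (d2 f) := by
  rw [d2_eq hf.one]; exact CD_DD hf _
theorem CD_d3 {f : ℝ → ℝ → ℝ → ℝ} (hf : CD 2 f) : CD 1 (d3 f) := by
  rw [d3_eq hf.one]; exact CD_DD hf _
theorem d12 {f : ℝ → ℝ → ℝ → ℝ} (hf : CD 2 f) : d1 (d2 f) = d2 (d1 f) := by
  rw [d1_eq (CD_d2 hf), d2_eq (CD_d1 hf), d1_eq hf.one, d2_eq hf.one, DD_comm hf]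
theorem d13 {f : ℝ → ℝ → ℝ → ℝ} (hf : CD 2 f) : d3 (d1 f) = d1 (d3 f) := by
  rw [d1_eq (CD_d3 hf), d3_eq (CD_d1 hf), d1_eq hf.one, d3_eq hf.one, DD_comm hf]
theorem d23 {f : ℝ → ℝ → ℝ → ℝ} (hf : CD 2 f) : d3 (d2 f) = d2 (d3 f) := by
  rw [d2_eq (CD_d3 hf), d3_eq (CD_d2 hf), d2_eq hf.one, d3_eq hf.one, DD_comm hf]

theorem hd1 {f : ℝ → ℝ → ℝ → ℝ} (hf : CD 1 f) (a b t : ℝ) :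
    HasDerivAt (fun s => f s b t) (d1 f a b t) a := by
  rw [d1_eq hf]
  exact chain_aux hf (hasDerivAt_id a) (hasDerivAt_const a b) (hasDerivAt_const a t)
theorem hd2 {f : ℝ → ℝ → ℝ → ℝ} (hf : CD 1 f) (a b t : ℝ) :
    HasDerivAt (fun s => f a s t) (d2 f a b t) b := by
  rw [d2_eq hf]
  exact chain_aux hf (hasDerivAt_const b a) (hasDerivAt_id b) (hasDerivAt_const b t)
theorem hd3 {f : ℝ → ℝ → ℝ → ℝ} (hf : CD 1 f) (a b t : ℝ) :
    HasDerivAt (fun s => f a b s) (d3 f a b t) t := by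
  rw [d3_eq hf]
  exact chain_aux hf (hasDerivAt_const t a) (hasDerivAt_const t b) (hasDerivAt_id t)

/-- Lemma 1 of the paper: For the boundary layer system of the upper
convected Maxwell fluid — velocities `u, v`, symmetric extra stress `S`, pressure
gradient `P`, flow map `φ = (x, y)` with deformation gradient `F = D_ξ φ` of
determinant one — the horizontal Lagrangian position `x(ξ₁, ξ₂, t)` satisfies the
semilinear wave equation
`x_tt = Σᵢⱼ ∂_{ξᵢ} (C_{ji} ∂_{ξⱼ} x) − P(x, t)`, where `C(ξ) = S(ξ, 0)`. -/
theorem stmt0 (T : ℝ) (hT : 0 < T)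
    (u v : ℝ → ℝ → ℝ → ℝ)
    (S : ℝ → ℝ → ℝ → Matrix (Fin 2) (Fin 2) ℝ)
    (P : ℝ → ℝ → ℝ)
    (x y : ℝ → ℝ → ℝ → ℝ)
    -- smoothness
    (hu : ContDiff ℝ 2 fun p : ℝ × ℝ × ℝ => u p.1 p.2.1 p.2.2)
    (hv : ContDiff ℝ 2 fun p : ℝ × ℝ × ℝ => v p.1 p.2.1 p.2.2)
    (hS : ∀ i j, ContDiff ℝ 2 fun p : ℝ × ℝ × ℝ => S p.1 p.2.1 p.2.2 i j)
    (hSsymm : ∀ a b t, (S a b t).IsSymm)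
    (hP : Continuous fun p : ℝ × ℝ => P p.1 p.2)
    (hx : ContDiff ℝ 2 fun p : ℝ × ℝ × ℝ => x p.1 p.2.1 p.2.2)
    (hy : ContDiff ℝ 2 fun p : ℝ × ℝ × ℝ => y p.1 p.2.1 p.2.2)
    -- flow map: ∂φ/∂t(ξ,t) = (u,v)(φ(ξ,t),t), φ(ξ,0) = ξ
    (hflowx : ∀ ξ₁ ξ₂ t, HasDerivAt (fun τ => x ξ₁ ξ₂ τ) (u (x ξ₁ ξ₂ t) (y ξ₁ ξ₂ t) t) t)
    (hflowy : ∀ ξ₁ ξ₂ t, HasDerivAt (fun τ => y ξ₁ ξ₂ τ) (v (x ξ₁ ξ₂ t) (y ξ₁ ξ₂ t) t) t)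
    (hx0 : ∀ ξ₁ ξ₂, x ξ₁ ξ₂ 0 = ξ₁)
    (hy0 : ∀ ξ₁ ξ₂, y ξ₁ ξ₂ 0 = ξ₂)
    -- deformation gradient: F = D_ξ φ, det F = 1, F invertible
    (F : ℝ → ℝ → ℝ → Matrix (Fin 2) (Fin 2) ℝ)
    (hF : ∀ ξ₁ ξ₂ t, F ξ₁ ξ₂ t =
      !![deriv (fun s => x s ξ₂ t) ξ₁, deriv (fun s => x ξ₁ s t) ξ₂;
         deriv (fun s => y s ξ₂ t) ξ₁, deriv (fun s => y ξ₁ s t) ξ₂])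
    (hdet : ∀ ξ₁ ξ₂, ∀ t ∈ Icc (0 : ℝ) T, (F ξ₁ ξ₂ t).det = 1)
    (hFinv : ∀ ξ₁ ξ₂, ∀ t ∈ Icc (0 : ℝ) T, IsUnit (F ξ₁ ξ₂ t))
    -- momentum equation: u_t + u u_x + v u_y = ∂S₁₁/∂x + ∂S₁₂/∂y − P(x,t)
    (hmom : ∀ a b : ℝ, ∀ t ∈ Icc (0 : ℝ) T,
      deriv (fun τ => u a b τ) t + u a b t * deriv (fun s => u s b t) a
          + v a b t * deriv (fun r => u a r t) b
        = deriv (fun s => S s b t 0 0) a + deriv (fun r => S a r t 0 1) b - P a t)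
    -- constitutive equation: S_t + u S_x + v S_y − (∇v)S − S(∇v)ᵀ = 0
    (hconst : ∀ a b : ℝ, ∀ t ∈ Icc (0 : ℝ) T, ∀ i j : Fin 2,
      deriv (fun τ => S a b τ i j) t + u a b t * deriv (fun s => S s b t i j) a
          + v a b t * deriv (fun r => S a r t i j) b
        - ((!![deriv (fun s => u s b t) a, deriv (fun r => u a r t) b;
               deriv (fun s => v s b t) a, deriv (fun r => v a r t) b] * S a b t) i j)
        - ((S a b t * (!![deriv (fun s => u s b t) a, deriv (fun r => u a r t) b;
               deriv (fun s => v s b t) a, deriv (fun r => v a r t) b])ᵀ) i j) = 0)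
    -- C(ξ) := S(ξ, 0)
    (C : ℝ → ℝ → Matrix (Fin 2) (Fin 2) ℝ)
    (hC : ∀ ξ₁ ξ₂, C ξ₁ ξ₂ = S ξ₁ ξ₂ 0) :
    -- conclusion: x_tt = Σᵢⱼ ∂_{ξᵢ}(C_{ji} ∂_{ξⱼ} x) − P(x,t)
    ∀ ξ₁ ξ₂ : ℝ, ∀ t ∈ Icc (0 : ℝ) T,
      deriv (fun τ => deriv (fun σ => x ξ₁ ξ₂ σ) τ) t
        = deriv (fun s => C s ξ₂ 0 0 * deriv (fun r => x r ξ₂ t) s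
                        + C s ξ₂ 1 0 * deriv (fun r => x s r t) ξ₂) ξ₁
          + deriv (fun r => C ξ₁ r 0 1 * deriv (fun s => x s r t) ξ₁
                          + C ξ₁ r 1 1 * deriv (fun r' => x ξ₁ r' t) r) ξ₂
          - P (x ξ₁ ξ₂ t) t := by
  change CD 2 u at hu
  change CD 2 v at hv
  change ∀ i j, CD 2 (fun a b t => S a b t i j) at hS
  change CD 2 x at hx
  change CD 2 y at hy
  have hx3 : d3 x = fun a b t => u (x a b t) (y a b t) t := by
    funext a b t; exact (hflowx a b t).deriv
  have hy3 : d3 y = fun a b t => v (x a b t) (y a b t) t := by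
    funext a b t; exact (hflowy a b t).deriv
  -- F_t = L F
  have fx1 : ∀ a b t, HasDerivAt (fun τ => d1 x a b τ)
      (d1 u (x a b t) (y a b t) t * d1 x a b t + d2 u (x a b t) (y a b t) t * d1 y a b t) t := by
    intro a b t
    have h := hd3 (CD_d1 hx) a b t
    rw [d13 hx, hx3] at h
    have h' := chain hu.one (hd1 hx.one a b t) (hd1 hy.one a b t) (hasDerivAt_const a t)
    convert h using 1
    refine Eq.trans ?_ h'.deriv.symm
    ring
  have fx2 : ∀ a b t, HasDerivAt (fun τ => d2 x a b τ)
      (d1 u (x a b t) (y a b t) t * d2 x a b t + d2 u (x a b t) (y a b t) t * d2 y a b t) t := by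
    intro a b t
    have h := hd3 (CD_d2 hx) a b t
    rw [d23 hx, hx3] at h
    have h' := chain hu.one (hd2 hx.one a b t) (hd2 hy.one a b t) (hasDerivAt_const b t)
    convert h using 1
    refine Eq.trans ?_ h'.deriv.symm
    ring
  have fy1 : ∀ a b t, HasDerivAt (fun τ => d1 y a b τ)
      (d1 v (x a b t) (y a b t) t * d1 x a b t + d2 v (x a b t) (y a b t) t * d1 y a b t) t := by
    intro a b t
    have h := hd3 (CD_d1 hy) a b t
    rw [d13 hy, hy3] at h
    have h' := chain hv.one (hd1 hx.one a b t) (hd1 hy.one a b t) (hasDerivAt_const a t)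
    convert h using 1
    refine Eq.trans ?_ h'.deriv.symm
    ring
  have fy2 : ∀ a b t, HasDerivAt (fun τ => d2 y a b τ)
      (d1 v (x a b t) (y a b t) t * d2 x a b t + d2 v (x a b t) (y a b t) t * d2 y a b t) t := by
    intro a b t
    have h := hd3 (CD_d2 hy) a b t
    rw [d23 hy, hy3] at h
    have h' := chain hv.one (hd2 hx.one a b t) (hd2 hy.one a b t) (hasDerivAt_const b t)
    convert h using 1
    refine Eq.trans ?_ h'.deriv.symm
    ring
  have det1 : ∀ a b, ∀ t ∈ Icc (0 : ℝ) T,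
      d1 x a b t * d2 y a b t - d2 x a b t * d1 y a b t = 1 := by
    intro a b t ht
    have h := hdet a b t ht
    rw [hF, Matrix.det_fin_two_of] at h
    exact h
  have trL : ∀ a b, ∀ t ∈ Icc (0 : ℝ) T,
      d1 u (x a b t) (y a b t) t + d2 v (x a b t) (y a b t) t = 0 := by
    intro a b t ht
    have h := (((fx1 a b t).mul (fy2 a b t)).sub ((fx2 a b t).mul (fy1 a b t))).hasDerivWithinAt
      (s := Icc 0 T)
    have h0 : HasDerivWithinAt (fun _ : ℝ => (1 : ℝ)) 0 (Icc 0 T) t :=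
      hasDerivWithinAt_const _ _ _
    have h1 := h0.congr (f₁ := fun τ => d1 x a b τ * d2 y a b τ - d2 x a b τ * d1 y a b τ)
      (fun τ hτ => det1 a b τ hτ) (det1 a b t ht)
    have h2 := (uniqueDiffOn_Icc hT t ht).eq_deriv _ h h1
    have h3 := det1 a b t ht
    linear_combination h2 - (d1 u (x a b t) (y a b t) t + d2 v (x a b t) (y a b t) t) * h3
  -- derivative of the stress along particle paths
  have hs : ∀ i j a b t, HasDerivAt (fun τ => S (x a b τ) (y a b τ) τ i j)
      (d1 (fun a b t => S a b t i j) (x a b t) (y a b t) t * u (x a b t) (y a b t) t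
        + d2 (fun a b t => S a b t i j) (x a b t) (y a b t) t * v (x a b t) (y a b t) t
        + d3 (fun a b t => S a b t i j) (x a b t) (y a b t) t * 1) t := by
    intro i j a b t
    exact chain (hS i j).one (hflowx a b t) (hflowy a b t) (hasDerivAt_id t)
  have hc : ∀ a b : ℝ, ∀ t ∈ Icc (0 : ℝ) T, ∀ i j : Fin 2,
      d3 (fun a b t => S a b t i j) a b t + u a b t * d1 (fun a b t => S a b t i j) a b t
          + v a b t * d2 (fun a b t => S a b t i j) a b t
        - ((!![d1 u a b t, d2 u a b t; d1 v a b t, d2 v a b t] * S a b t) i j)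
        - ((S a b t * (!![d1 u a b t, d2 u a b t; d1 v a b t, d2 v a b t])ᵀ) i j) = 0 := hconst
  have hst : ∀ i j a b, ∀ t ∈ Icc (0 : ℝ) T, HasDerivAt (fun τ => S (x a b τ) (y a b τ) τ i j)
      ((!![d1 u (x a b t) (y a b t) t, d2 u (x a b t) (y a b t) t;
          d1 v (x a b t) (y a b t) t, d2 v (x a b t) (y a b t) t] * S (x a b t) (y a b t) t) i j
        + (S (x a b t) (y a b t) t * (!![d1 u (x a b t) (y a b t) t, d2 u (x a b t) (y a b t) t;
          d1 v (x a b t) (y a b t) t, d2 v (x a b t) (y a b t) t])ᵀ) i j) t := by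
    intro i j a b t ht
    convert hs i j a b t using 1
    linear_combination -(hc (x a b t) (y a b t) t ht i j)
  -- initial values
  have ix1 : ∀ a b, d1 x a b 0 = 1 := by
    intro a b; simp [d1, hx0]
  have ix2 : ∀ a b, d2 x a b 0 = 0 := by
    intro a b; simp [d2, hx0]
  have iy1 : ∀ a b, d1 y a b 0 = 0 := by
    intro a b; simp [d1, hy0]
  have iy2 : ∀ a b, d2 y a b 0 = 1 := by
    intro a b; simp [d2, hy0]
  -- F⁻¹ S F⁻ᵀ is constant in time
  have hconstG : ∀ (g : ℝ → ℝ) , (∀ t ∈ Icc (0 : ℝ) T, HasDerivAt g 0 t) →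
      ∀ t ∈ Icc (0 : ℝ) T, g t = g 0 := by
    intro g hg
    exact constant_of_has_deriv_right_zero
      (fun t ht => (hg t ht).continuousAt.continuousWithinAt)
      (fun t ht => (hg t ⟨ht.1, ht.2.le⟩).hasDerivWithinAt)
  -- general bilinear invariant
  have inv : ∀ a b, ∀ (p q r s : ℝ → ℝ),
      (∀ t ∈ Icc (0 : ℝ) T, HasDerivAt p
        (- d1 u (x a b t) (y a b t) t * p t - d1 v (x a b t) (y a b t) t * q t) t) →
      (∀ t ∈ Icc (0 : ℝ) T, HasDerivAt q
        (- d2 u (x a b t) (y a b t) t * p t - d2 v (x a b t) (y a b t) t * q t) t) →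
      (∀ t ∈ Icc (0 : ℝ) T, HasDerivAt r
        (- d1 u (x a b t) (y a b t) t * r t - d1 v (x a b t) (y a b t) t * s t) t) →
      (∀ t ∈ Icc (0 : ℝ) T, HasDerivAt s
        (- d2 u (x a b t) (y a b t) t * r t - d2 v (x a b t) (y a b t) t * s t) t) →
      ∀ t ∈ Icc (0 : ℝ) T,
        p t * S (x a b t) (y a b t) t 0 0 * r t + p t * S (x a b t) (y a b t) t 0 1 * s t
        + q t * S (x a b t) (y a b t) t 1 0 * r t + q t * S (x a b t) (y a b t) t 1 1 * s t
        = p 0 * S a b 0 0 0 * r 0 + p 0 * S a b 0 0 1 * s 0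
        + q 0 * S a b 0 1 0 * r 0 + q 0 * S a b 0 1 1 * s 0 := by
    intro a b p q r s hp hq hr hs' t ht
    have := hconstG (fun t => p t * S (x a b t) (y a b t) t 0 0 * r t
        + p t * S (x a b t) (y a b t) t 0 1 * s t
        + q t * S (x a b t) (y a b t) t 1 0 * r t
        + q t * S (x a b t) (y a b t) t 1 1 * s t) ?_ t ht
    · simpa only [hx0, hy0] using this
    · intro t ht
      have h := ((((hp t ht).mul (hst 0 0 a b t ht)).mul (hr t ht)).add
        (((hp t ht).mul (hst 0 1 a b t ht)).mul (hs' t ht))).add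
        (((hq t ht).mul (hst 1 0 a b t ht)).mul (hr t ht)) |>.add
        (((hq t ht).mul (hst 1 1 a b t ht)).mul (hs' t ht))
      refine HasDerivAt.congr_deriv h ?_
      simp [Matrix.mul_apply, Fin.sum_univ_two]
      ring
  have r1p : ∀ a b, ∀ t ∈ Icc (0 : ℝ) T, HasDerivAt (fun t => d2 y a b t)
        (- d1 u (x a b t) (y a b t) t * d2 y a b t
          - d1 v (x a b t) (y a b t) t * (- d2 x a b t)) t := by
    intro a b t ht
    refine (fy2 a b t).congr_deriv ?_
    linear_combination (d2 y a b t) * trL a b t ht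
  have r1q : ∀ a b, ∀ t ∈ Icc (0 : ℝ) T, HasDerivAt (fun t => - d2 x a b t)
        (- d2 u (x a b t) (y a b t) t * d2 y a b t
          - d2 v (x a b t) (y a b t) t * (- d2 x a b t)) t := by
    intro a b t ht
    refine (fx2 a b t).neg.congr_deriv ?_
    linear_combination -(d2 x a b t) * trL a b t ht
  have r2p : ∀ a b, ∀ t ∈ Icc (0 : ℝ) T, HasDerivAt (fun t => - d1 y a b t)
        (- d1 u (x a b t) (y a b t) t * (- d1 y a b t)
          - d1 v (x a b t) (y a b t) t * (d1 x a b t)) t := by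
    intro a b t ht
    refine (fy1 a b t).neg.congr_deriv ?_
    linear_combination -(d1 y a b t) * trL a b t ht
  have r2q : ∀ a b, ∀ t ∈ Icc (0 : ℝ) T, HasDerivAt (fun t => d1 x a b t)
        (- d2 u (x a b t) (y a b t) t * (- d1 y a b t)
          - d2 v (x a b t) (y a b t) t * (d1 x a b t)) t := by
    intro a b t ht
    refine (fx1 a b t).congr_deriv ?_
    linear_combination (d1 x a b t) * trL a b t ht
  intro ξ₁ ξ₂ t ht
  have A1 : ∀ a b, C a b 0 0 * d1 x a b t + C a b 1 0 * d2 x a b t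
      = d2 y a b t * S (x a b t) (y a b t) t 0 0 - d2 x a b t * S (x a b t) (y a b t) t 0 1 := by
    intro a b
    have g00 := inv a b _ _ _ _ (r1p a b) (r1q a b) (r1p a b) (r1q a b) t ht
    have g10 := inv a b _ _ _ _ (r2p a b) (r2q a b) (r1p a b) (r1q a b) t ht
    simp only [ix1, ix2, iy1, iy2] at g00 g10
    rw [hC]
    linear_combination (- d1 x a b t) * g00 - d2 x a b t * g10
      + (d2 y a b t * S (x a b t) (y a b t) t 0 0
        - d2 x a b t * S (x a b t) (y a b t) t 0 1) * det1 a b t ht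
  have A2 : ∀ a b, C a b 0 1 * d1 x a b t + C a b 1 1 * d2 x a b t
      = - d1 y a b t * S (x a b t) (y a b t) t 0 0 + d1 x a b t * S (x a b t) (y a b t) t 0 1 := by
    intro a b
    have g01 := inv a b _ _ _ _ (r1p a b) (r1q a b) (r2p a b) (r2q a b) t ht
    have g11 := inv a b _ _ _ _ (r2p a b) (r2q a b) (r2p a b) (r2q a b) t ht
    simp only [ix1, ix2, iy1, iy2] at g01 g11
    rw [hC]
    linear_combination (- d1 x a b t) * g01 - d2 x a b t * g11
      + (- d1 y a b t * S (x a b t) (y a b t) t 0 0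
        + d1 x a b t * S (x a b t) (y a b t) t 0 1) * det1 a b t ht
  change d3 (d3 x) ξ₁ ξ₂ t
    = deriv (fun s => C s ξ₂ 0 0 * d1 x s ξ₂ t + C s ξ₂ 1 0 * d2 x s ξ₂ t) ξ₁
      + deriv (fun r => C ξ₁ r 0 1 * d1 x ξ₁ r t + C ξ₁ r 1 1 * d2 x ξ₁ r t) ξ₂
      - P (x ξ₁ ξ₂ t) t
  simp only [A1, A2]
  have s1 : ∀ i j, HasDerivAt (fun s => S (x s ξ₂ t) (y s ξ₂ t) t i j) _ ξ₁ := fun i j =>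
    chain (hS i j).one (hd1 hx.one ξ₁ ξ₂ t) (hd1 hy.one ξ₁ ξ₂ t) (hasDerivAt_const ξ₁ t)
  have s2 : ∀ i j, HasDerivAt (fun s => S (x ξ₁ s t) (y ξ₁ s t) t i j) _ ξ₂ := fun i j =>
    chain (hS i j).one (hd2 hx.one ξ₁ ξ₂ t) (hd2 hy.one ξ₁ ξ₂ t) (hasDerivAt_const ξ₂ t)
  have B1 := (((hd1 (CD_d2 hy) ξ₁ ξ₂ t).mul (s1 0 0)).sub
    ((hd1 (CD_d2 hx) ξ₁ ξ₂ t).mul (s1 0 1))).deriv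
  have B2 := (((hd2 (CD_d1 hy) ξ₁ ξ₂ t).neg.mul (s2 0 0)).add
    ((hd2 (CD_d1 hx) ξ₁ ξ₂ t).mul (s2 0 1))).deriv
  have B3 := (chain hu.one (hflowx ξ₁ ξ₂ t) (hflowy ξ₁ ξ₂ t) (hasDerivAt_id t)).deriv
  have B4 := (congrArg (fun f => d3 f ξ₁ ξ₂ t) hx3).trans B3
  have M : d3 u (x ξ₁ ξ₂ t) (y ξ₁ ξ₂ t) t
      + u (x ξ₁ ξ₂ t) (y ξ₁ ξ₂ t) t * d1 u (x ξ₁ ξ₂ t) (y ξ₁ ξ₂ t) t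
      + v (x ξ₁ ξ₂ t) (y ξ₁ ξ₂ t) t * d2 u (x ξ₁ ξ₂ t) (y ξ₁ ξ₂ t) t
      = d1 (fun a b t => S a b t 0 0) (x ξ₁ ξ₂ t) (y ξ₁ ξ₂ t) t
        + d2 (fun a b t => S a b t 0 1) (x ξ₁ ξ₂ t) (y ξ₁ ξ₂ t) t - P (x ξ₁ ξ₂ t) t :=
    hmom _ _ t ht
  refine B4.trans ?_
  refine Eq.trans ?_ (congrArg₂ (fun p q => p + q - P (x ξ₁ ξ₂ t) t) B1.symm B2.symm)
  rw [d12 hx, d12 hy]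
  simp only [id, Pi.neg_apply]
  linear_combination M - (d1 (fun a b t => S a b t 0 0) (x ξ₁ ξ₂ t) (y ξ₁ ξ₂ t) t
        + d2 (fun a b t => S a b t 0 1) (x ξ₁ ξ₂ t) (y ξ₁ ξ₂ t) t) * det1 ξ₁ ξ₂ t ht
end

section
/- Let φ : ℝ² → ℝ² be a C² diffeomorphism whose inverse is C¹ and whose Jacobian determinant satisfies det Dφ(ξ) = 1 for all ξ. Let F(ξ) = Dφ(ξ) (a 2×2 matrix), and let C : ℝ² → Matrix (Fin 2) (Fin 2) ℝ be C¹. Define S : ℝ² → Matrix (Fin 2) (Fin 2) ℝ by S(x) = F(φ⁻¹(x)) · C(φ⁻¹(x)) · F(φ⁻¹(x))ᵀ. Then for every ξ ∈ ℝ² and every i ∈ {1,2}: Σ_{j=1}^{2} (∂S_{ij}/∂x_j)(φ(ξ)) = Σ_{k,l=1}^{2} ∂/∂ξ_l ( C_{kl}(ξ) F_{ik}(ξ) ). -/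
open Matrix

/-- The Jacobian matrix of a map `φ : ℝ² → ℝ²`, with partial derivatives taken
coordinatewise. -/
noncomputable def jacobian2 (φ : ℝ × ℝ → ℝ × ℝ) (ξ : ℝ × ℝ) : Matrix (Fin 2) (Fin 2) ℝ :=
  !![deriv (fun s => (φ (s, ξ.2)).1) ξ.1, deriv (fun s => (φ (ξ.1, s)).1) ξ.2;
     deriv (fun s => (φ (s, ξ.2)).2) ξ.1, deriv (fun s => (φ (ξ.1, s)).2) ξ.2]

lemma aux_d1 (G : ℝ × ℝ → ℝ) (p : ℝ × ℝ) (hG : DifferentiableAt ℝ G p) :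
    deriv (fun s => G (s, p.2)) p.1 = fderiv ℝ G p (1, 0) := by
  have h : HasDerivAt (fun s : ℝ => (s, p.2)) ((1 : ℝ), (0 : ℝ)) p.1 :=
    (hasDerivAt_id p.1).prodMk (hasDerivAt_const _ _)
  exact (HasFDerivAt.comp_hasDerivAt (f := fun s : ℝ => (s, p.2)) p.1 hG.hasFDerivAt h).deriv

lemma aux_d2 (G : ℝ × ℝ → ℝ) (p : ℝ × ℝ) (hG : DifferentiableAt ℝ G p) :
    deriv (fun s => G (p.1, s)) p.2 = fderiv ℝ G p (0, 1) := by
  have h : HasDerivAt (fun s : ℝ => (p.1, s)) ((0 : ℝ), (1 : ℝ)) p.2 :=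
    (hasDerivAt_const _ _).prodMk (hasDerivAt_id p.2)
  exact (HasFDerivAt.comp_hasDerivAt (f := fun s : ℝ => (p.1, s)) p.2 hG.hasFDerivAt h).deriv

lemma aux_jac (φ : ℝ × ℝ → ℝ × ℝ) (hφ : Differentiable ℝ φ) (ξ : ℝ × ℝ) :
    jacobian2 φ ξ = !![(fderiv ℝ φ ξ (1, 0)).1, (fderiv ℝ φ ξ (0, 1)).1;
      (fderiv ℝ φ ξ (1, 0)).2, (fderiv ℝ φ ξ (0, 1)).2] := by
  have h1 : ∀ v, fderiv ℝ (fun x => (φ x).1) ξ v = (fderiv ℝ φ ξ v).1 := fun v => by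
    rw [((hφ ξ).hasFDerivAt.fst).fderiv]; rfl
  have h2 : ∀ v, fderiv ℝ (fun x => (φ x).2) ξ v = (fderiv ℝ φ ξ v).2 := fun v => by
    rw [((hφ ξ).hasFDerivAt.snd).fderiv]; rfl
  unfold jacobian2
  rw [aux_d1 (fun x => (φ x).1) ξ (hφ ξ).fst, aux_d2 (fun x => (φ x).1) ξ (hφ ξ).fst,
    aux_d1 (fun x => (φ x).2) ξ (hφ ξ).snd, aux_d2 (fun x => (φ x).2) ξ (hφ ξ).snd,
    h1, h1, h2, h2]

lemma aux_lin (L : ℝ × ℝ →L[ℝ] ℝ) (x y : ℝ) : L (x, y) = x * L (1, 0) + y * L (0, 1) := by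
  have : ((x, y) : ℝ × ℝ) = x • ((1 : ℝ), (0 : ℝ)) + y • ((0 : ℝ), (1 : ℝ)) := by simp
  rw [this, map_add, map_smul, map_smul]; rfl

lemma aux_lin2 (L : ℝ × ℝ →L[ℝ] ℝ × ℝ) (x y : ℝ) :
    L (x, y) = x • L (1, 0) + y • L (0, 1) := by
  have : ((x, y) : ℝ × ℝ) = x • ((1 : ℝ), (0 : ℝ)) + y • ((0 : ℝ), (1 : ℝ)) := by simp
  rw [this, map_add, map_smul, map_smul]

/-- For a volume-preserving C² diffeomorphism `φ` of the plane with C¹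
inverse `ψ` and Jacobian `F = Dφ` of determinant one, and a C¹ matrix field `C`,
the Eulerian divergence of the push-forward stress `S = F C Fᵀ` (composed with `φ⁻¹`),
evaluated along `φ`, equals the Lagrangian divergence `Σ_{k,l} ∂_{ξ_l}(C_{kl} F_{ik})`. -/
theorem stmt1 (φ ψ : ℝ × ℝ → ℝ × ℝ)
    (hφ : ContDiff ℝ 2 φ) (hψ : ContDiff ℝ 1 ψ)
    (hli : Function.LeftInverse ψ φ) (hri : Function.RightInverse ψ φ)
    (hdet : ∀ ξ, (jacobian2 φ ξ).det = 1)
    (C : ℝ × ℝ → Matrix (Fin 2) (Fin 2) ℝ)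
    (hC : ∀ i j, ContDiff ℝ 1 fun ξ => C ξ i j)
    (S : ℝ × ℝ → Matrix (Fin 2) (Fin 2) ℝ)
    (hS : ∀ x : ℝ × ℝ, S x = jacobian2 φ (ψ x) * C (ψ x) * (jacobian2 φ (ψ x))ᵀ) :
    ∀ ξ : ℝ × ℝ, ∀ i : Fin 2,
      deriv (fun s => S (s, (φ ξ).2) i 0) (φ ξ).1
          + deriv (fun s => S ((φ ξ).1, s) i 1) (φ ξ).2
        = ∑ k : Fin 2,
            (deriv (fun s => C (s, ξ.2) k 0 * jacobian2 φ (s, ξ.2) i k) ξ.1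
              + deriv (fun s => C (ξ.1, s) k 1 * jacobian2 φ (ξ.1, s) i k) ξ.2) := by
  intro ξ i
  have hφd : Differentiable ℝ φ := hφ.differentiable (by norm_num)
  have hψd : Differentiable ℝ ψ := hψ.differentiable (by norm_num)
  have hφ' : ContDiff ℝ 1 (fderiv ℝ φ) := hφ.fderiv_right (by norm_num)
  have hφ'd : Differentiable ℝ (fderiv ℝ φ) := hφ'.differentiable (by norm_num)
  have hCd : ∀ i j, Differentiable ℝ fun ξ => C ξ i j :=
    fun i j => (hC i j).differentiable (by norm_num)
  have hF : ∀ i j, Differentiable ℝ fun ξ => jacobian2 φ ξ i j := by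
    intro i j
    simp only [aux_jac φ hφd]
    fin_cases i <;> fin_cases j <;> simp <;> fun_prop
  have hv : ∀ v w, fderiv ℝ (fun x => fderiv ℝ φ x v) ξ w = fderiv ℝ (fderiv ℝ φ) ξ w v := by
    intro v w
    rw [((hφ'd ξ).hasFDerivAt.clm_apply (hasFDerivAt_const v ξ)).fderiv]
    simp
  have hsym : fderiv ℝ (fun x => fderiv ℝ φ x (1, 0)) ξ (0, 1)
      = fderiv ℝ (fun x => fderiv ℝ φ x (0, 1)) ξ (1, 0) := by
    rw [hv, hv]
    exact (hφ.contDiffAt.isSymmSndFDerivAt (by simp)) _ _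
  have hdv : ∀ v, DifferentiableAt ℝ (fun x => fderiv ℝ φ x v) ξ := by
    intro v; fun_prop
  have hsymF : ∀ j, fderiv ℝ (fun x => jacobian2 φ x j 0) ξ (0, 1)
      = fderiv ℝ (fun x => jacobian2 φ x j 1) ξ (1, 0) := by
    intro j
    simp only [aux_jac φ hφd]
    fin_cases j
    · simp only [Fin.zero_eta, of_apply, cons_val', cons_val_zero, cons_val_one, cons_val_fin_one]
      rw [((hdv (1, 0)).hasFDerivAt.fst).fderiv, ((hdv (0, 1)).hasFDerivAt.fst).fderiv]
      exact congrArg Prod.fst hsym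
    · simp only [Fin.mk_one, of_apply, cons_val', cons_val_zero, cons_val_one, cons_val_fin_one]
      rw [((hdv (1, 0)).hasFDerivAt.snd).fderiv, ((hdv (0, 1)).hasFDerivAt.snd).fderiv]
      exact congrArg Prod.snd hsym
  have hdet' := hdet
  simp only [det_fin_two] at hdet'
  -- derivative of the inverse
  have hinv : ∀ v, fderiv ℝ ψ (φ ξ) (fderiv ℝ φ ξ v) = v := by
    intro v
    have h1 := (hψd (φ ξ)).hasFDerivAt.comp ξ (hφd ξ).hasFDerivAt
    have h2 : ψ ∘ φ = id := funext hli
    rw [h2] at h1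
    have := h1.unique (hasFDerivAt_id ξ)
    exact congrArg (fun L => L v) this
  have hF0 := aux_jac φ hφd ξ
  have e00 : (fderiv ℝ φ ξ (1, 0)).1 = jacobian2 φ ξ 0 0 := by rw [hF0]; rfl
  have e01 : (fderiv ℝ φ ξ (0, 1)).1 = jacobian2 φ ξ 0 1 := by rw [hF0]; rfl
  have e10 : (fderiv ℝ φ ξ (1, 0)).2 = jacobian2 φ ξ 1 0 := by rw [hF0]; rfl
  have e11 : (fderiv ℝ φ ξ (0, 1)).2 = jacobian2 φ ξ 1 1 := by rw [hF0]; rfl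
  have hψ1 : fderiv ℝ ψ (φ ξ) (1, 0) = (jacobian2 φ ξ 1 1, -jacobian2 φ ξ 1 0) := by
    rw [← hinv (jacobian2 φ ξ 1 1, -jacobian2 φ ξ 1 0), aux_lin2 (fderiv ℝ φ ξ)]
    congr 1
    ext
    · simp [e00, e01]; linarith [hdet' ξ]
    · simp [e10, e11]; ring
  have hψ2 : fderiv ℝ ψ (φ ξ) (0, 1) = (-jacobian2 φ ξ 0 1, jacobian2 φ ξ 0 0) := by
    rw [← hinv (-jacobian2 φ ξ 0 1, jacobian2 φ ξ 0 0), aux_lin2 (fderiv ℝ φ ξ)]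
    congr 1
    ext
    · simp [e00, e01]; ring
    · simp [e10, e11]; linarith [hdet' ξ]
  have hSe : ∀ j, (fun x => S x i j) = fun x =>
      (fun y => (jacobian2 φ y i 0 * C y 0 0 + jacobian2 φ y i 1 * C y 1 0) * jacobian2 φ y j 0
       + (jacobian2 φ y i 0 * C y 0 1 + jacobian2 φ y i 1 * C y 1 1) * jacobian2 φ y j 1) (ψ x) := by
    intro j; funext x; rw [hS]
    simp [Matrix.mul_apply, Fin.sum_univ_two]
  generalize jacobian2 φ = F at *
  have hP : ∀ k, DifferentiableAt ℝ (fun y => F y i 0 * C y 0 k + F y i 1 * C y 1 k) ξ :=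
    fun k => (((hF i 0) ξ).mul (hCd 0 k ξ)).add (((hF i 1) ξ).mul (hCd 1 k ξ))
  have hH : ∀ j, HasFDerivAt (fun y => (F y i 0 * C y 0 0 + F y i 1 * C y 1 0) * F y j 0
       + (F y i 0 * C y 0 1 + F y i 1 * C y 1 1) * F y j 1) _ ξ := fun j =>
    ((hP 0).hasFDerivAt.mul (hF j 0 ξ).hasFDerivAt).add
      ((hP 1).hasFDerivAt.mul (hF j 1 ξ).hasFDerivAt)
  have hSd : ∀ j, HasFDerivAt (fun x => S x i j) _ (φ ξ) := fun j => by
    rw [hSe j]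
    exact HasFDerivAt.comp (φ ξ) (by rw [hli ξ]; exact hH j) (hψd (φ ξ)).hasFDerivAt
  have hPd : ∀ k, HasFDerivAt (fun y => F y i 0 * C y 0 k + F y i 1 * C y 1 k) _ ξ := fun k =>
    ((hF i 0 ξ).hasFDerivAt.mul (hCd 0 k ξ).hasFDerivAt).add
      ((hF i 1 ξ).hasFDerivAt.mul (hCd 1 k ξ).hasFDerivAt)
  have hdd : ∀ v, fderiv ℝ (fun y => F y 0 0 * F y 1 1 - F y 0 1 * F y 1 0) ξ v = 0 := by
    intro v; simp [hdet']
  have hdd2 := (((hF 0 0 ξ).hasFDerivAt.mul (hF 1 1 ξ).hasFDerivAt).sub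
      ((hF 0 1 ξ).hasFDerivAt.mul (hF 1 0 ξ).hasFDerivAt)).fderiv
  have hq1 := hdd (1, 0)
  have hq2 := hdd (0, 1)
  erw [hdd2] at hq1 hq2
  rw [aux_d1 (fun x => S x i 0) _ (hSd 0).differentiableAt,
    aux_d2 (fun x => S x i 1) _ (hSd 1).differentiableAt, (hSd 0).fderiv, (hSd 1).fderiv]
  rw [Fin.sum_univ_two]
  have hCF : ∀ k l, HasFDerivAt (fun y => C y k l * F y i k) _ ξ := fun k l =>
    (hCd k l ξ).hasFDerivAt.mul (hF i k ξ).hasFDerivAt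
  rw [aux_d1 (fun y => C y 0 0 * F y i 0) ξ (hCF 0 0).differentiableAt,
    aux_d1 (fun y => C y 1 0 * F y i 1) ξ (hCF 1 0).differentiableAt,
    aux_d2 (fun y => C y 0 1 * F y i 0) ξ (hCF 0 1).differentiableAt,
    aux_d2 (fun y => C y 1 1 * F y i 1) ξ (hCF 1 1).differentiableAt,
    (hCF 0 0).fderiv, (hCF 1 0).fderiv, (hCF 0 1).fderiv, (hCF 1 1).fderiv]
  rw [ContinuousLinearMap.comp_apply, ContinuousLinearMap.comp_apply, hψ1, hψ2,
    aux_lin, aux_lin _ (-F ξ 0 1)]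
  rw [(hPd 0).fderiv, (hPd 1).fderiv]
  simp only [_root_.add_apply, _root_.sub_apply, _root_.smul_apply, smul_eq_mul] at hq1 hq2 ⊢
  have s0 := hsymF 0
  have s1 := hsymF 1
  have hD := hdet' ξ
  linear_combination (F ξ i 0 * C ξ 0 0 + F ξ i 1 * C ξ 1 0) * (hq1 - F ξ 1 0 * s0 + F ξ 0 0 * s1)
    + (F ξ i 0 * C ξ 0 1 + F ξ i 1 * C ξ 1 1) * (hq2 - F ξ 1 1 * s0 + F ξ 0 1 * s1)
    + (F ξ i 0 * fderiv ℝ (fun x => C x 0 0) ξ (1, 0) + C ξ 0 0 * fderiv ℝ (fun x => F x i 0) ξ (1, 0)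
      + F ξ i 1 * fderiv ℝ (fun x => C x 1 0) ξ (1, 0) + C ξ 1 0 * fderiv ℝ (fun x => F x i 1) ξ (1, 0)
      + F ξ i 0 * fderiv ℝ (fun x => C x 0 1) ξ (0, 1) + C ξ 0 1 * fderiv ℝ (fun x => F x i 0) ξ (0, 1)
      + F ξ i 1 * fderiv ℝ (fun x => C x 1 1) ξ (0, 1) + C ξ 1 1 * fderiv ℝ (fun x => F x i 1) ξ (0, 1))
      * hD
end

section
/- Let n ≥ 1 and let F, S, L : [0,T] → Matrix (Fin n) (Fin n) ℝ be differentiable maps such that F(t) is invertible for every t ∈ [0,T], F'(t) = L(t) F(t), and S'(t) = L(t) S(t) + S(t) L(t)ᵀ. Then the map t ↦ F(t)⁻¹ S(t) (F(t)⁻¹)ᵀ is constant on [0,T]. -/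
open Matrix Set

section aux
attribute [local instance] Matrix.linftyOpNormedRing Matrix.linftyOpNormedAlgebra

theorem aux_hasDeriv {n : ℕ} (M : ℝ → Matrix (Fin n) (Fin n) ℝ) (M' : Matrix (Fin n) (Fin n) ℝ)
    (t : ℝ) (h : ∀ i j, HasDerivAt (fun τ => M τ i j) (M' i j) t) : HasDerivAt M M' t := by
  have e : M = fun τ => ∑ i, ∑ j, M τ i j • Matrix.single i j (1 : ℝ) := by
    funext τ
    conv_lhs => rw [Matrix.matrix_eq_sum_single (M τ)]
    simp [Matrix.smul_single]
  have e' : M' = ∑ i, ∑ j, M' i j • Matrix.single i j (1 : ℝ) := by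
    conv_lhs => rw [Matrix.matrix_eq_sum_single M']
    simp [Matrix.smul_single]
  rw [e, e']
  exact HasDerivAt.fun_sum fun i _ => HasDerivAt.fun_sum fun j _ => (h i j).smul_const _

theorem aux_inv {n : ℕ} (M : ℝ → Matrix (Fin n) (Fin n) ℝ) (M' : Matrix (Fin n) (Fin n) ℝ)
    (t : ℝ) (h : HasDerivAt M M' t) (hu : IsUnit (M t)) :
    HasDerivAt (fun τ => (M τ)⁻¹) (-((M t)⁻¹ * M' * (M t)⁻¹)) t := by
  obtain ⟨u, hu⟩ := hu
  have h1 := hasFDerivAt_ringInverse (𝕜 := ℝ) u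
  rw [hu] at h1
  have h2 := h1.comp_hasDerivAt t h
  have e : ((u⁻¹ : (Matrix (Fin n) (Fin n) ℝ)ˣ) : Matrix (Fin n) (Fin n) ℝ) = (M t)⁻¹ := by
    rw [← hu, Matrix.coe_units_inv]
  simp [Function.comp_def, e, ← Matrix.nonsing_inv_eq_ringInverse] at h2
  exact h2

theorem aux_main (n : ℕ) (T : ℝ)
    (F S L : ℝ → Matrix (Fin n) (Fin n) ℝ)
    (hFinv : ∀ t ∈ Icc (0 : ℝ) T, IsUnit (F t))
    (hF : ∀ t ∈ Icc (0 : ℝ) T, ∀ i j : Fin n,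
      HasDerivAt (fun τ => F τ i j) ((L t * F t) i j) t)
    (hS : ∀ t ∈ Icc (0 : ℝ) T, ∀ i j : Fin n,
      HasDerivAt (fun τ => S τ i j) ((L t * S t + S t * (L t)ᵀ) i j) t) :
    ∀ t ∈ Icc (0 : ℝ) T,
      (F t)⁻¹ * S t * ((F t)⁻¹)ᵀ = (F 0)⁻¹ * S 0 * ((F 0)⁻¹)ᵀ := by
  have key : ∀ t ∈ Icc (0 : ℝ) T,
      HasDerivAt (fun τ => (F τ)⁻¹ * S τ * ((F τ)⁻¹)ᵀ) 0 t := by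
    intro t ht
    have hu := hFinv t ht
    have hd : IsUnit (F t).det := (Matrix.isUnit_iff_isUnit_det _).1 hu
    have hut : IsUnit (F t)ᵀ := by
      rw [Matrix.isUnit_iff_isUnit_det, Matrix.det_transpose]; exact hd
    have hdt : IsUnit (F t)ᵀ.det := (Matrix.isUnit_iff_isUnit_det _).1 hut
    have d1 := aux_inv F _ t (aux_hasDeriv F _ t (hF t ht)) hu
    have d2 := aux_hasDeriv S _ t (hS t ht)
    have d3 := aux_inv (fun τ => (F τ)ᵀ) _ t
      (aux_hasDeriv (fun τ => (F τ)ᵀ) (L t * F t)ᵀ t (fun i j => hF t ht j i)) hut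
    have d := (d1.fun_mul d2).fun_mul d3
    simp only [Matrix.transpose_nonsing_inv]
    refine d.congr_deriv ?_
    have a1 : (F t)⁻¹ * (L t * F t) * (F t)⁻¹ = (F t)⁻¹ * L t := by
      rw [← mul_assoc, Matrix.mul_nonsing_inv_cancel_right _ _ hd]
    have a2 : ((F t)ᵀ)⁻¹ * (L t * F t)ᵀ * ((F t)ᵀ)⁻¹ = (L t)ᵀ * ((F t)ᵀ)⁻¹ := by
      rw [Matrix.transpose_mul, Matrix.nonsing_inv_mul_cancel_left _ _ hdt]
    rw [a1, a2]
    noncomm_ring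
  exact constant_of_has_deriv_right_zero
    (fun t ht => (key t ht).continuousAt.continuousWithinAt)
    (fun t ht => (key t (Ico_subset_Icc_self ht)).hasDerivWithinAt)

end aux

/-- If `F, S, L : [0,T] → Matrix (Fin n) (Fin n) ℝ` are differentiable,
`F(t)` is invertible, `F' = L F` and `S' = L S + S Lᵀ`, then `t ↦ F⁻¹ S F⁻ᵀ` is
constant on `[0, T]`. Derivatives of matrix-valued maps are taken entrywise. -/
theorem stmt6 (n : ℕ) (hn : 1 ≤ n) (T : ℝ) (hT : 0 < T)
    (F S L : ℝ → Matrix (Fin n) (Fin n) ℝ)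
    (hL : ∀ i j, Differentiable ℝ fun t => L t i j)
    (hFinv : ∀ t ∈ Icc (0 : ℝ) T, IsUnit (F t))
    (hF : ∀ t ∈ Icc (0 : ℝ) T, ∀ i j : Fin n,
      HasDerivAt (fun τ => F τ i j) ((L t * F t) i j) t)
    (hS : ∀ t ∈ Icc (0 : ℝ) T, ∀ i j : Fin n,
      HasDerivAt (fun τ => S τ i j) ((L t * S t + S t * (L t)ᵀ) i j) t) :
    ∀ t ∈ Icc (0 : ℝ) T,
      (F t)⁻¹ * S t * ((F t)⁻¹)ᵀ = (F 0)⁻¹ * S 0 * ((F 0)⁻¹)ᵀ := by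
  exact aux_main n T F S L hFinv hF hS
end

section
/- Let a₁₁, a₁₂, a₂₂ : ℝ² → ℝ be C¹ functions of ξ = (ξ₁, ξ₂), and let U, V, W : ℝ² × [0,T] → ℝ be C² functions satisfying ∂V/∂t = a₁₁ ∂U/∂ξ₁ + a₁₂ ∂U/∂ξ₂ and ∂W/∂t = a₁₂ ∂U/∂ξ₁ + a₂₂ ∂U/∂ξ₂ on ℝ² × [0,T]. Then the combination G := a₂₂ ∂V/∂ξ₂ − a₁₂ ∂W/∂ξ₂ + a₁₂ ∂V/∂ξ₁ − a₁₁ ∂W/∂ξ₁ satisfies, pointwise, ∂G/∂t = ( a₁₂ ∂a₁₁/∂ξ₁ + a₂₂ ∂a₁₁/∂ξ₂ − a₁₁ ∂a₁₂/∂ξ₁ − a₁₂ ∂a₁₂/∂ξ₂ ) ∂U/∂ξ₁ + ( a₁₂ ∂a₁₂/∂ξ₁ + a₂₂ ∂a₁₂/∂ξ₂ − a₁₁ ∂a₂₂/∂ξ₁ − a₁₂ ∂a₂₂/∂ξ₂ ) ∂U/∂ξ₂; in particular all second derivatives of U cancel. -/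
open Set

theorem aux_fst (F : ℝ → ℝ → ℝ) (hF : ContDiff ℝ 2 fun p : ℝ × ℝ => F p.1 p.2) (x t : ℝ) :
    deriv (fun s => F s t) x = fderiv ℝ (fun p : ℝ × ℝ => F p.1 p.2) (x, t) (1, 0) := by
  have h1 : HasDerivAt (fun s : ℝ => (s, t)) ((1 : ℝ), (0 : ℝ)) x :=
    (hasDerivAt_id x).prodMk (hasDerivAt_const x t)
  have h2 := ((hF.differentiable (by norm_num)) (x, t)).hasFDerivAt
  exact (h2.comp_hasDerivAt x h1).deriv

theorem aux_snd (F : ℝ → ℝ → ℝ) (hF : ContDiff ℝ 2 fun p : ℝ × ℝ => F p.1 p.2) (x t : ℝ) :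
    deriv (fun s => F x s) t = fderiv ℝ (fun p : ℝ × ℝ => F p.1 p.2) (x, t) (0, 1) := by
  have h1 : HasDerivAt (fun s : ℝ => (x, s)) ((0 : ℝ), (1 : ℝ)) t :=
    (hasDerivAt_const t x).prodMk (hasDerivAt_id t)
  have h2 := ((hF.differentiable (by norm_num)) (x, t)).hasFDerivAt
  exact (h2.comp_hasDerivAt t h1).deriv

theorem aux_mixed (F : ℝ → ℝ → ℝ) (hF : ContDiff ℝ 2 fun p : ℝ × ℝ => F p.1 p.2) (x t : ℝ) :
    DifferentiableAt ℝ (fun τ => deriv (fun s => F s τ) x) t ∧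
    DifferentiableAt ℝ (fun s => deriv (fun τ => F s τ) t) x ∧
    deriv (fun τ => deriv (fun s => F s τ) x) t = deriv (fun s => deriv (fun τ => F s τ) t) x := by
  have hd : ContDiff ℝ 1 (fderiv ℝ (fun p : ℝ × ℝ => F p.1 p.2)) :=
    hF.fderiv_right (by norm_num)
  have h2 := ((hd.differentiable (by norm_num)) (x, t)).hasFDerivAt
  have h1 : HasDerivAt (fun s : ℝ => (s, t)) ((1 : ℝ), (0 : ℝ)) x :=
    (hasDerivAt_id x).prodMk (hasDerivAt_const x t)
  have h1' : HasDerivAt (fun s : ℝ => (x, s)) ((0 : ℝ), (1 : ℝ)) t :=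
    (hasDerivAt_const t x).prodMk (hasDerivAt_id t)
  have e1 : HasDerivAt (fun τ => fderiv ℝ (fun p : ℝ × ℝ => F p.1 p.2) (x, τ) (1, 0))
      (fderiv ℝ (fderiv ℝ (fun p : ℝ × ℝ => F p.1 p.2)) (x, t) (0, 1) (1, 0)) t :=
    (ContinuousLinearMap.apply ℝ ℝ ((1 : ℝ), (0 : ℝ))).hasFDerivAt.comp_hasDerivAt t
      (h2.comp_hasDerivAt t h1')
  have e2 : HasDerivAt (fun s => fderiv ℝ (fun p : ℝ × ℝ => F p.1 p.2) (s, t) (0, 1))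
      (fderiv ℝ (fderiv ℝ (fun p : ℝ × ℝ => F p.1 p.2)) (x, t) (1, 0) (0, 1)) x :=
    (ContinuousLinearMap.apply ℝ ℝ ((0 : ℝ), (1 : ℝ))).hasFDerivAt.comp_hasDerivAt x
      (h2.comp_hasDerivAt x h1)
  have f1 : (fun τ => deriv (fun s => F s τ) x) =
      fun τ => fderiv ℝ (fun p : ℝ × ℝ => F p.1 p.2) (x, τ) (1, 0) :=
    funext fun τ => aux_fst F hF x τ
  have f2 : (fun s => deriv (fun τ => F s τ) t) =
      fun s => fderiv ℝ (fun p : ℝ × ℝ => F p.1 p.2) (s, t) (0, 1) :=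
    funext fun s => aux_snd F hF s t
  have hs : IsSymmSndFDerivAt ℝ (fun p : ℝ × ℝ => F p.1 p.2) (x, t) :=
    hF.contDiffAt.isSymmSndFDerivAt (by simp)
  rw [f1, f2]
  refine ⟨e1.differentiableAt, e2.differentiableAt, ?_⟩
  rw [e1.deriv, e2.deriv]
  exact hs.eq (0, 1) (1, 0)

theorem aux_second (f : ℝ → ℝ) (hf : ContDiff ℝ 2 f) (x : ℝ) :
    DifferentiableAt ℝ (fun s => deriv f s) x := by
  have : ContDiff ℝ (1 + 1) f := by norm_num; exact hf
  exact (contDiff_succ_iff_deriv.1 this).2.2.differentiable (by norm_num) x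

/-- Structural identity of Step 4 of the proof of Theorem 1.
If `V_t = a₁₁ U_{ξ₁} + a₁₂ U_{ξ₂}` and `W_t = a₁₂ U_{ξ₁} + a₂₂ U_{ξ₂}` with
time-independent C¹ coefficients, then
`G = a₂₂ V_{ξ₂} − a₁₂ W_{ξ₂} + a₁₂ V_{ξ₁} − a₁₁ W_{ξ₁}` satisfies
`G_t = (a₁₂ ∂₁a₁₁ + a₂₂ ∂₂a₁₁ − a₁₁ ∂₁a₁₂ − a₁₂ ∂₂a₁₂) U_{ξ₁}`
`    + (a₁₂ ∂₁a₁₂ + a₂₂ ∂₂a₁₂ − a₁₁ ∂₁a₂₂ − a₁₂ ∂₂a₂₂) U_{ξ₂}`;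
in particular all second derivatives of `U` cancel. -/
theorem stmt14 (T : ℝ) (hT : 0 < T)
    (a11 a12 a22 : ℝ → ℝ → ℝ)
    (ha11 : ContDiff ℝ 1 fun p : ℝ × ℝ => a11 p.1 p.2)
    (ha12 : ContDiff ℝ 1 fun p : ℝ × ℝ => a12 p.1 p.2)
    (ha22 : ContDiff ℝ 1 fun p : ℝ × ℝ => a22 p.1 p.2)
    (U V W : ℝ → ℝ → ℝ → ℝ)
    (hU : ContDiff ℝ 2 fun p : ℝ × ℝ × ℝ => U p.1 p.2.1 p.2.2)
    (hV : ContDiff ℝ 2 fun p : ℝ × ℝ × ℝ => V p.1 p.2.1 p.2.2)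
    (hW : ContDiff ℝ 2 fun p : ℝ × ℝ × ℝ => W p.1 p.2.1 p.2.2)
    (heqV : ∀ ξ₁ ξ₂ : ℝ, ∀ t ∈ Icc (0 : ℝ) T,
      deriv (fun τ => V ξ₁ ξ₂ τ) t
        = a11 ξ₁ ξ₂ * deriv (fun s => U s ξ₂ t) ξ₁
          + a12 ξ₁ ξ₂ * deriv (fun s => U ξ₁ s t) ξ₂)
    (heqW : ∀ ξ₁ ξ₂ : ℝ, ∀ t ∈ Icc (0 : ℝ) T,
      deriv (fun τ => W ξ₁ ξ₂ τ) t
        = a12 ξ₁ ξ₂ * deriv (fun s => U s ξ₂ t) ξ₁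
          + a22 ξ₁ ξ₂ * deriv (fun s => U ξ₁ s t) ξ₂) :
    ∀ ξ₁ ξ₂ : ℝ, ∀ t ∈ Icc (0 : ℝ) T,
      deriv (fun τ =>
          a22 ξ₁ ξ₂ * deriv (fun s => V ξ₁ s τ) ξ₂
          - a12 ξ₁ ξ₂ * deriv (fun s => W ξ₁ s τ) ξ₂
          + a12 ξ₁ ξ₂ * deriv (fun s => V s ξ₂ τ) ξ₁
          - a11 ξ₁ ξ₂ * deriv (fun s => W s ξ₂ τ) ξ₁) t
        = (a12 ξ₁ ξ₂ * deriv (fun s => a11 s ξ₂) ξ₁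
            + a22 ξ₁ ξ₂ * deriv (fun s => a11 ξ₁ s) ξ₂
            - a11 ξ₁ ξ₂ * deriv (fun s => a12 s ξ₂) ξ₁
            - a12 ξ₁ ξ₂ * deriv (fun s => a12 ξ₁ s) ξ₂) * deriv (fun s => U s ξ₂ t) ξ₁
          + (a12 ξ₁ ξ₂ * deriv (fun s => a12 s ξ₂) ξ₁
            + a22 ξ₁ ξ₂ * deriv (fun s => a12 ξ₁ s) ξ₂
            - a11 ξ₁ ξ₂ * deriv (fun s => a22 s ξ₂) ξ₁
            - a12 ξ₁ ξ₂ * deriv (fun s => a22 ξ₁ s) ξ₂) * deriv (fun s => U ξ₁ s t) ξ₂ := by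
  intro x y t ht
  have c1 : ∀ F : ℝ → ℝ → ℝ → ℝ, (ContDiff ℝ 2 fun p : ℝ × ℝ × ℝ => F p.1 p.2.1 p.2.2) →
      ContDiff ℝ 2 fun p : ℝ × ℝ => F p.1 y p.2 := fun F hF =>
    hF.comp (f := fun p : ℝ × ℝ => (p.1, y, p.2)) (by fun_prop)
  have c2 : ∀ F : ℝ → ℝ → ℝ → ℝ, (ContDiff ℝ 2 fun p : ℝ × ℝ × ℝ => F p.1 p.2.1 p.2.2) →
      ContDiff ℝ 2 fun p : ℝ × ℝ => F x p.1 p.2 := fun F hF =>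
    hF.comp (f := fun p : ℝ × ℝ => (x, p.1, p.2)) (by fun_prop)
  have c3 : ContDiff ℝ 2 fun p : ℝ × ℝ => U p.1 p.2 t :=
    hU.comp (f := fun p : ℝ × ℝ => (p.1, p.2, t)) (by fun_prop)
  obtain ⟨V1, -, V1e⟩ := aux_mixed (fun s τ => V s y τ) (c1 V hV) x t
  obtain ⟨V2, -, V2e⟩ := aux_mixed (fun s τ => V x s τ) (c2 V hV) y t
  obtain ⟨W1, -, W1e⟩ := aux_mixed (fun s τ => W s y τ) (c1 W hW) x t
  obtain ⟨W2, -, W2e⟩ := aux_mixed (fun s τ => W x s τ) (c2 W hW) y t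
  obtain ⟨U12, U21, Ue⟩ := aux_mixed (fun s r => U s r t) c3 x y
  have U11 := aux_second (fun s => U s y t)
    (c3.comp (f := fun s : ℝ => (s, y)) (by fun_prop)) x
  have U22 := aux_second (fun s => U x s t)
    (c3.comp (f := fun s : ℝ => (x, s)) (by fun_prop)) y
  have d1 : ∀ a : ℝ → ℝ → ℝ, (ContDiff ℝ 1 fun p : ℝ × ℝ => a p.1 p.2) →
      DifferentiableAt ℝ (fun s => a s y) x := fun a ha =>
    (ha.comp (f := fun s : ℝ => (s, y)) (by fun_prop)).differentiable (by norm_num) x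
  have d2 : ∀ a : ℝ → ℝ → ℝ, (ContDiff ℝ 1 fun p : ℝ × ℝ => a p.1 p.2) →
      DifferentiableAt ℝ (fun s => a x s) y := fun a ha =>
    (ha.comp (f := fun s : ℝ => (x, s)) (by fun_prop)).differentiable (by norm_num) y
  have k1 : ∀ a b : ℝ → ℝ → ℝ, (ContDiff ℝ 1 fun p : ℝ × ℝ => a p.1 p.2) →
      (ContDiff ℝ 1 fun p : ℝ × ℝ => b p.1 p.2) → _ := fun a b ha hb =>
    (((d1 a ha).hasDerivAt.mul U11.hasDerivAt).add
      ((d1 b hb).hasDerivAt.mul U21.hasDerivAt)).deriv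
  have k2 : ∀ a b : ℝ → ℝ → ℝ, (ContDiff ℝ 1 fun p : ℝ × ℝ => a p.1 p.2) →
      (ContDiff ℝ 1 fun p : ℝ × ℝ => b p.1 p.2) → _ := fun a b ha hb =>
    (((d2 a ha).hasDerivAt.mul U12.hasDerivAt).add
      ((d2 b hb).hasDerivAt.mul U22.hasDerivAt)).deriv
  have V1f := V1e.trans ((congrArg (fun f => deriv f x)
    (funext fun s => heqV s y t ht)).trans (k1 a11 a12 ha11 ha12))
  have V2f := V2e.trans ((congrArg (fun f => deriv f y)
    (funext fun s => heqV x s t ht)).trans (k2 a11 a12 ha11 ha12))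
  have W1f := W1e.trans ((congrArg (fun f => deriv f x)
    (funext fun s => heqW s y t ht)).trans (k1 a12 a22 ha12 ha22))
  have W2f := W2e.trans ((congrArg (fun f => deriv f y)
    (funext fun s => heqW x s t ht)).trans (k2 a12 a22 ha12 ha22))
  have main := ((((V2.hasDerivAt.const_mul (a22 x y)).sub
    (W2.hasDerivAt.const_mul (a12 x y))).add
    (V1.hasDerivAt.const_mul (a12 x y))).sub (W1.hasDerivAt.const_mul (a11 x y))).deriv
  refine main.trans ?_
  rw [V1f, V2f, W1f, W2f, Ue]
  ring
end

section
/- Let a₁₁, a₁₂, a₂₂ : ℝ² → ℝ be C¹, and let U, V, W : ℝ² × [0,T] → ℝ be C² with ∂V/∂t = a₁₁ ∂U/∂ξ₁ + a₁₂ ∂U/∂ξ₂, ∂W/∂t = a₁₂ ∂U/∂ξ₁ + a₂₂ ∂U/∂ξ₂, and V(ξ, 0) = W(ξ, 0) = 0 for all ξ ∈ ℝ². Then for all (ξ, t): a₂₂(ξ) ∂V/∂ξ₂(ξ,t) − a₁₂(ξ) ∂W/∂ξ₂(ξ,t) = ∫₀ᵗ [ ( a₁₂ ∂a₁₁/∂ξ₁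 + a₂₂ ∂a₁₁/∂ξ₂ − a₁₁ ∂a₁₂/∂ξ₁ − a₁₂ ∂a₁₂/∂ξ₂ )(ξ) ∂U/∂ξ₁(ξ,s) + ( a₁₂ ∂a₁₂/∂ξ₁ + a₂₂ ∂a₁₂/∂ξ₂ − a₁₁ ∂a₂₂/∂ξ₁ − a₁₂ ∂a₂₂/∂ξ₂ )(ξ) ∂U/∂ξ₂(ξ,s) ] ds − a₁₂(ξ) ∂V/∂ξ₁(ξ,t) + a₁₁(ξ) ∂W/∂ξ₁(ξ,t). -/
open Set

lemma aux_line {E : Type*} [NormedAddCommGroup E] [NormedSpace ℝ E] {F : E → ℝ}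
    (hF : Differentiable ℝ F) {c : ℝ → E} {v : E} {t : ℝ} (hc : HasDerivAt c v t) :
    HasDerivAt (fun s => F (c s)) (fderiv ℝ F (c t) v) t :=
  (hF (c t)).hasFDerivAt.comp_hasDerivAt t hc

lemma aux_line2 {E : Type*} [NormedAddCommGroup E] [NormedSpace ℝ E] {F : E → ℝ}
    (hF : ContDiff ℝ 2 F) {c : ℝ → E} {v : E} {t : ℝ} (w : E) (hc : HasDerivAt c v t) :
    HasDerivAt (fun s => fderiv ℝ F (c s) w) (fderiv ℝ (fderiv ℝ F) (c t) v w) t := by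
  have h1 : ContDiff ℝ 1 (fderiv ℝ F) := hF.fderiv_right (by norm_num)
  have h2 : HasDerivAt (fun s => fderiv ℝ F (c s)) (fderiv ℝ (fderiv ℝ F) (c t) v) t :=
    ((h1.differentiable (by norm_num)) (c t)).hasFDerivAt.comp_hasDerivAt t hc
  simpa using h2.clm_apply (hasDerivAt_const t w)

lemma aux_symm {E : Type*} [NormedAddCommGroup E] [NormedSpace ℝ E] {F : E → ℝ}
    (hF : ContDiff ℝ 2 F) (p v w : E) :
    fderiv ℝ (fderiv ℝ F) p v w = fderiv ℝ (fderiv ℝ F) p w v :=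
  (hF.contDiffAt.isSymmSndFDerivAt (by simp)).eq v w

lemma aux_c1 (x y t : ℝ) : HasDerivAt (fun s : ℝ => ((s, y, t) : ℝ × ℝ × ℝ)) (1, 0, 0) x :=
  (hasDerivAt_id x).prodMk (hasDerivAt_const x ((y, t) : ℝ × ℝ))

lemma aux_c2 (x y t : ℝ) : HasDerivAt (fun s : ℝ => ((x, s, t) : ℝ × ℝ × ℝ)) (0, 1, 0) y :=
  (hasDerivAt_const y x).prodMk ((hasDerivAt_id y).prodMk (hasDerivAt_const y t))

lemma aux_c3 (x y t : ℝ) : HasDerivAt (fun s : ℝ => ((x, y, s) : ℝ × ℝ × ℝ)) (0, 0, 1) t :=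
  (hasDerivAt_const t x).prodMk ((hasDerivAt_const t y).prodMk (hasDerivAt_id t))

/-- Differentiating the equation along a curve in the spatial variables. -/
lemma aux_mix {F U : ℝ × ℝ × ℝ → ℝ} (hF : ContDiff ℝ 2 F) (hU : ContDiff ℝ 2 U)
    {a b : ℝ → ℝ} {a' b' r : ℝ} {c : ℝ → ℝ × ℝ × ℝ} {v : ℝ × ℝ × ℝ}
    (hc : HasDerivAt c v r) (ha : HasDerivAt a a' r) (hb : HasDerivAt b b' r)
    (h : ∀ s, fderiv ℝ F (c s) (0, 0, 1)
      = a s * fderiv ℝ U (c s) (1, 0, 0) + b s * fderiv ℝ U (c s) (0, 1, 0)) :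
    fderiv ℝ (fderiv ℝ F) (c r) (0, 0, 1) v
      = (a' * fderiv ℝ U (c r) (1, 0, 0) + a r * fderiv ℝ (fderiv ℝ U) (c r) v (1, 0, 0))
        + (b' * fderiv ℝ U (c r) (0, 1, 0) + b r * fderiv ℝ (fderiv ℝ U) (c r) v (0, 1, 0)) := by
  rw [aux_symm hF]
  have h1 := aux_line2 hF (0, 0, 1) hc
  have h2 := (ha.mul (aux_line2 hU (1, 0, 0) hc)).add (hb.mul (aux_line2 hU (0, 1, 0) hc))
  have h3 : (fun s => fderiv ℝ F (c s) (0, 0, 1)) = _ := funext h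
  rw [h3] at h1
  exact h1.unique h2

/-- Identity (41) in Step 4 of the proof of Theorem 1. Under
`V_t = a₁₁ U_{ξ₁} + a₁₂ U_{ξ₂}`, `W_t = a₁₂ U_{ξ₁} + a₂₂ U_{ξ₂}` with
time-independent C¹ coefficients and zero initial data `V(·,0) = W(·,0) = 0`,
one has
`a₂₂ V_{ξ₂} − a₁₂ W_{ξ₂} = ∫₀ᵗ (c₁ U_{ξ₁} + c₂ U_{ξ₂}) ds − a₁₂ V_{ξ₁} + a₁₁ W_{ξ₁}`,
with `c₁ = a₁₂ ∂₁a₁₁ + a₂₂ ∂₂a₁₁ − a₁₁ ∂₁a₁₂ − a₁₂ ∂₂a₁₂` and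
`c₂ = a₁₂ ∂₁a₁₂ + a₂₂ ∂₂a₁₂ − a₁₁ ∂₁a₂₂ − a₁₂ ∂₂a₂₂`. -/
theorem stmt15 (T : ℝ) (hT : 0 < T)
    (a11 a12 a22 : ℝ → ℝ → ℝ)
    (ha11 : ContDiff ℝ 1 fun p : ℝ × ℝ => a11 p.1 p.2)
    (ha12 : ContDiff ℝ 1 fun p : ℝ × ℝ => a12 p.1 p.2)
    (ha22 : ContDiff ℝ 1 fun p : ℝ × ℝ => a22 p.1 p.2)
    (U V W : ℝ → ℝ → ℝ → ℝ)
    (hU : ContDiff ℝ 2 fun p : ℝ × ℝ × ℝ => U p.1 p.2.1 p.2.2)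
    (hV : ContDiff ℝ 2 fun p : ℝ × ℝ × ℝ => V p.1 p.2.1 p.2.2)
    (hW : ContDiff ℝ 2 fun p : ℝ × ℝ × ℝ => W p.1 p.2.1 p.2.2)
    (heqV : ∀ ξ₁ ξ₂ : ℝ, ∀ t ∈ Icc (0 : ℝ) T,
      deriv (fun τ => V ξ₁ ξ₂ τ) t
        = a11 ξ₁ ξ₂ * deriv (fun s => U s ξ₂ t) ξ₁
          + a12 ξ₁ ξ₂ * deriv (fun s => U ξ₁ s t) ξ₂)
    (heqW : ∀ ξ₁ ξ₂ : ℝ, ∀ t ∈ Icc (0 : ℝ) T,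
      deriv (fun τ => W ξ₁ ξ₂ τ) t
        = a12 ξ₁ ξ₂ * deriv (fun s => U s ξ₂ t) ξ₁
          + a22 ξ₁ ξ₂ * deriv (fun s => U ξ₁ s t) ξ₂)
    (hV0 : ∀ ξ₁ ξ₂ : ℝ, V ξ₁ ξ₂ 0 = 0)
    (hW0 : ∀ ξ₁ ξ₂ : ℝ, W ξ₁ ξ₂ 0 = 0) :
    ∀ ξ₁ ξ₂ : ℝ, ∀ t ∈ Icc (0 : ℝ) T,
      a22 ξ₁ ξ₂ * deriv (fun s => V ξ₁ s t) ξ₂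
          - a12 ξ₁ ξ₂ * deriv (fun s => W ξ₁ s t) ξ₂
        = (∫ s in (0 : ℝ)..t,
            ((a12 ξ₁ ξ₂ * deriv (fun r => a11 r ξ₂) ξ₁
              + a22 ξ₁ ξ₂ * deriv (fun r => a11 ξ₁ r) ξ₂
              - a11 ξ₁ ξ₂ * deriv (fun r => a12 r ξ₂) ξ₁
              - a12 ξ₁ ξ₂ * deriv (fun r => a12 ξ₁ r) ξ₂) * deriv (fun r => U r ξ₂ s) ξ₁
            + (a12 ξ₁ ξ₂ * deriv (fun r => a12 r ξ₂) ξ₁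
              + a22 ξ₁ ξ₂ * deriv (fun r => a12 ξ₁ r) ξ₂
              - a11 ξ₁ ξ₂ * deriv (fun r => a22 r ξ₂) ξ₁
              - a12 ξ₁ ξ₂ * deriv (fun r => a22 ξ₁ r) ξ₂) * deriv (fun r => U ξ₁ r s) ξ₂))
          - a12 ξ₁ ξ₂ * deriv (fun s => V s ξ₂ t) ξ₁
          + a11 ξ₁ ξ₂ * deriv (fun s => W s ξ₂ t) ξ₁ := by
  have dU := hU.differentiable (by norm_num)
  have dV := hV.differentiable (by norm_num)
  have dW := hW.differentiable (by norm_num)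
  have U1 : ∀ x y t, deriv (fun s => U s y t) x = _ :=
    fun x y t => (aux_line dU (aux_c1 x y t)).deriv
  have U2 : ∀ x y t, deriv (fun s => U x s t) y = _ :=
    fun x y t => (aux_line dU (aux_c2 x y t)).deriv
  have V1 : ∀ x y t, deriv (fun s => V s y t) x = _ :=
    fun x y t => (aux_line dV (aux_c1 x y t)).deriv
  have V2 : ∀ x y t, deriv (fun s => V x s t) y = _ :=
    fun x y t => (aux_line dV (aux_c2 x y t)).deriv
  have V3 : ∀ x y t, deriv (fun s => V x y s) t = _ :=
    fun x y t => (aux_line dV (aux_c3 x y t)).deriv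
  have W1 : ∀ x y t, deriv (fun s => W s y t) x = _ :=
    fun x y t => (aux_line dW (aux_c1 x y t)).deriv
  have W2 : ∀ x y t, deriv (fun s => W x s t) y = _ :=
    fun x y t => (aux_line dW (aux_c2 x y t)).deriv
  have W3 : ∀ x y t, deriv (fun s => W x y s) t = _ :=
    fun x y t => (aux_line dW (aux_c3 x y t)).deriv
  have coef : ∀ a : ℝ → ℝ → ℝ, (ContDiff ℝ 1 fun p : ℝ × ℝ => a p.1 p.2) → ∀ x y,
      HasDerivAt (fun r => a r y) (deriv (fun r => a r y) x) x ∧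
      HasDerivAt (fun r => a x r) (deriv (fun r => a x r) y) y := by
    intro a ha x y
    have da := ha.differentiable (by norm_num)
    exact ⟨(aux_line da ((hasDerivAt_id x).prodMk
        (hasDerivAt_const x y))).differentiableAt.hasDerivAt,
      (aux_line da ((hasDerivAt_const y x).prodMk
        (hasDerivAt_id y))).differentiableAt.hasDerivAt⟩
  intro x y t ht
  have v10 : deriv (fun s => V s y 0) x = 0 := by simp [hV0]
  have v20 : deriv (fun s => V x s 0) y = 0 := by simp [hV0]
  have w10 : deriv (fun s => W s y 0) x = 0 := by simp [hW0]
  have w20 : deriv (fun s => W x s 0) y = 0 := by simp [hW0]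
  simp only [U1, U2, V1, V2, V3, W1, W2, W3] at heqV heqW v10 v20 w10 w20 ⊢
  obtain ⟨A1, A2⟩ := coef a11 ha11 x y
  obtain ⟨B1, B2⟩ := coef a12 ha12 x y
  obtain ⟨C1, C2⟩ := coef a22 ha22 x y
  have cU : ∀ v, Continuous fun s : ℝ =>
      fderiv ℝ (fun p : ℝ × ℝ × ℝ => U p.1 p.2.1 p.2.2) (x, y, s) v := fun v =>
    continuous_iff_continuousAt.2 fun s =>
      (aux_line2 hU v (aux_c3 x y s)).continuousAt
  rw [intervalIntegral.integral_eq_sub_of_hasDerivAt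
    (f := fun s =>
      a22 x y * fderiv ℝ (fun p : ℝ × ℝ × ℝ => V p.1 p.2.1 p.2.2) (x, y, s) (0, 1, 0)
      - a12 x y * fderiv ℝ (fun p : ℝ × ℝ × ℝ => W p.1 p.2.1 p.2.2) (x, y, s) (0, 1, 0)
      + a12 x y * fderiv ℝ (fun p : ℝ × ℝ × ℝ => V p.1 p.2.1 p.2.2) (x, y, s) (1, 0, 0)
      - a11 x y * fderiv ℝ (fun p : ℝ × ℝ × ℝ => W p.1 p.2.1 p.2.2) (x, y, s) (1, 0, 0))]
  · simp only [v10, v20, w10, w20]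
    ring
  · intro s hs
    rw [uIcc_of_le ht.1] at hs
    have hs' : s ∈ Icc (0 : ℝ) T := ⟨hs.1, hs.2.trans ht.2⟩
    have m1 := aux_mix hV hU (aux_c1 x y s) A1 B1 (fun r => heqV r y s hs')
    have m2 := aux_mix hV hU (aux_c2 x y s) A2 B2 (fun r => heqV x r s hs')
    have n1 := aux_mix hW hU (aux_c1 x y s) B1 C1 (fun r => heqW r y s hs')
    have n2 := aux_mix hW hU (aux_c2 x y s) B2 C2 (fun r => heqW x r s hs')
    have sy := aux_symm hU (x, y, s) (1, 0, 0) (0, 1, 0)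
    have hd := ((((aux_line2 hV (0, 1, 0) (aux_c3 x y s)).const_mul (a22 x y)).sub
      ((aux_line2 hW (0, 1, 0) (aux_c3 x y s)).const_mul (a12 x y))).add
      ((aux_line2 hV (1, 0, 0) (aux_c3 x y s)).const_mul (a12 x y))).sub
      ((aux_line2 hW (1, 0, 0) (aux_c3 x y s)).const_mul (a11 x y))
    refine hd.congr_deriv ?_
    rw [m1, m2, n1, n2, sy]
    ring
  · apply Continuous.intervalIntegrable
    exact (continuous_const.mul (cU _)).add (continuous_const.mul (cU _))
end
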